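/- If d is uniformly distributed on B_{f_d}(θ) and θ ≥ τΔ_K, then P(val(P_d) ≤ K) = μ_N(A_K(τ) ∩ B_{f_d}(θ)) / (θ^N μ_N(B_{f_d}(1))), and consequently Ĉ_K/μ_N(B_{f_d}(1)) · (τ/θ)^{N−K}(1 − δ̂_K τ/θ)^K − ε₀(K,τ,θ)/μ_N(B_{f_d}(1)) ≤ P(val(P_d) ≤ K) ≤ Ĉ_K/μ_N(B_{f_d}(1)) · (τ/θ)^{N−K}(1 + δ̂_K τ/θ)^K. -/

import Mathlib

open Submodule MeasureTheory Pointwise Filter Topology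

/-- A function `f` is a norm on the subspace `W` of `ℝ^N`. -/
def IsNormOn {N : ℕ} (f : EuclideanSpace ℝ (Fin N) → ℝ)
    (W : Submodule ℝ (EuclideanSpace ℝ (Fin N))) : Prop :=
  (∀ u ∈ W, 0 ≤ f u) ∧
  (∀ u ∈ W, (f u = 0 ↔ u = 0)) ∧
  (∀ (c : ℝ), ∀ u ∈ W, f (c • u) = |c| * f u) ∧
  (∀ u ∈ W, ∀ v ∈ W, f (u + v) ≤ f u + f v)

/-- `val(P_d)`: the minimal number of nonzero coefficients over all representations
`Σ λ_i ψ_i` of `d` within `‖·‖`-error `τ`. -/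
noncomputable def valP {N : ℕ} {ι : Type*} [Fintype ι]
    (ψ : ι → EuclideanSpace ℝ (Fin N)) (nn : EuclideanSpace ℝ (Fin N) → ℝ)
    (τ : ℝ) (d : EuclideanSpace ℝ (Fin N)) : ℕ :=
  sInf {k : ℕ | ∃ c : ι → ℝ, nn ((∑ i, c i • ψ i) - d) ≤ τ ∧ {i | c i ≠ 0}.ncard = k}

/-- `𝒥(K)`: a maximal family of subsets of the dictionary spanning pairwise distinct
`K`-dimensional subspaces. -/
def IsJFamily {N : ℕ} {ι : Type*} [Fintype ι] (ψ : ι → EuclideanSpace ℝ (Fin N))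
    (K : ℕ) (𝒥 : Set (Set ι)) : Prop :=
  (∀ J ∈ 𝒥, Module.finrank ℝ (Submodule.span ℝ (ψ '' J)) = K) ∧
  (∀ J₁ ∈ 𝒥, ∀ J₂ ∈ 𝒥, J₁ ≠ J₂ →
    Submodule.span ℝ (ψ '' J₁) ≠ Submodule.span ℝ (ψ '' J₂)) ∧
  (∀ J₁ : Set ι, Module.finrank ℝ (Submodule.span ℝ (ψ '' J₁)) = K →
    ∃ J ∈ 𝒥, Submodule.span ℝ (ψ '' J) = Submodule.span ℝ (ψ '' J₁))

/-- The constant `C_J = μ_{N−K}(P_{T_Jᗮ}(B_{‖·‖}(1))) · μ_K(T_J ∩ B_{f_d}(1))`. -/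
noncomputable def CJ {N : ℕ} {ι : Type*} [Fintype ι] (ψ : ι → EuclideanSpace ℝ (Fin N))
    (nn fd : EuclideanSpace ℝ (Fin N) → ℝ) (J : Set ι) : ENNReal :=
  volume ((fun w => orthogonalProjection (Submodule.span ℝ (ψ '' J))ᗮ w) '' {w | nn w ≤ 1})
    * volume ((fun v : Submodule.span ℝ (ψ '' J) =>
        (v : EuclideanSpace ℝ (Fin N))) ⁻¹' {w | fd w ≤ 1})

/-!
Since subspaces are cones, scaling by `θ⁻¹` turns the probability into the normalized volume of
`A_K(t) ∩ B_q(1)` with `t = τ / θ`, where `p` is the norm `‖·‖` and `q` the norm `f_d`, and `A_K(t)`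
is the union of the cylinders `T_J + B_p(t)`. A point of such a cylinder differs from its orthogonal
projection onto `T_J` by a vector of `q`-norm at most `δ t`, so the volume of the cylinder cut by
`B_q(1)` lies between those of two orthogonal boxes, each the product of `P_{T_Jᗮ}(B_p(t))` with the
`q`-ball of radius `1 ± δ t` in `T_J`. The union bound gives the upper estimate. For the lower one,
Bonferroni's inequality leaves the pairwise intersections of cylinders, which lie in cylinders of
radius `O(t)` around the lower-dimensional subspaces `T_J ∩ T_L` and hence have volume
`O(t ^ (N - K + 1))`.
-/

section Seminorm

variable {E : Type*} [NormedAddCommGroup E] [NormedSpace ℝ E] [FiniteDimensional ℝ E]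

lemma continuous_seminorm (p : Seminorm ℝ E) : Continuous p :=
  continuousOn_univ.1 (p.convexOn.continuousOn isOpen_univ)

lemma exists_norm_le_mul_seminorm {p : Seminorm ℝ E} (hp : ∀ x, p x = 0 → x = 0) :
    ∃ c, 0 < c ∧ ∀ x, ‖x‖ ≤ c * p x := by
  have hpos : ∀ x ∈ Metric.sphere (0 : E) 1, 0 < p x := fun x hx =>
    (apply_nonneg p x).lt_of_ne' fun h => by simp [hp x h] at hx
  obtain ⟨a, ha, hmin⟩ := (isCompact_sphere (0 : E) 1).exists_forall_le'
    (continuous_seminorm p).continuousOn hpos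
  refine ⟨a⁻¹, inv_pos.2 ha, fun x => ?_⟩
  rcases eq_or_ne x 0 with rfl | hx
  · simp
  have hx' : 0 < ‖x‖ := norm_pos_iff.2 hx
  have hunit : a ≤ p (‖x‖⁻¹ • x) := hmin _ (by simp [norm_smul, hx'.ne'])
  rw [map_smul_eq_mul, norm_inv, norm_norm, le_inv_mul_iff₀ hx'] at hunit
  rwa [le_inv_mul_iff₀ ha, mul_comm]

lemma isCompact_seminorm_closedBall {p : Seminorm ℝ E} (hp : ∀ x, p x = 0 → x = 0) (r : ℝ) :
    IsCompact (p.closedBall 0 r) := by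
  obtain ⟨c, hc, hle⟩ := exists_norm_le_mul_seminorm hp
  refine Metric.isCompact_of_isClosed_isBounded ?_
    ((Metric.isBounded_closedBall (x := (0 : E)) (r := c * r)).subset fun x hx => ?_)
  · rw [p.closedBall_zero_eq]
    exact isClosed_le (continuous_seminorm p) continuous_const
  · rw [p.mem_closedBall_zero] at hx
    rw [mem_closedBall_zero_iff]
    exact (hle x).trans (by gcongr)

lemma exists_seminorm_le_mul_seminorm (q : Seminorm ℝ E) {p : Seminorm ℝ E}
    (hp : ∀ x, p x = 0 → x = 0) : ∃ δ, 0 ≤ δ ∧ ∀ x y, ‖x‖ ≤ ‖y‖ → q x ≤ δ * p y := by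
  obtain ⟨C, hC, hqC⟩ := q.bound_of_continuous_normedSpace (continuous_seminorm q)
  obtain ⟨c, hc, hpc⟩ := exists_norm_le_mul_seminorm hp
  refine ⟨C * c, by positivity, fun x y hxy => ?_⟩
  calc q x ≤ C * ‖x‖ := hqC x
    _ ≤ C * (c * p y) := by gcongr; exact hxy.trans (hpc y)
    _ = C * c * p y := (mul_assoc C c _).symm

lemma exists_add_eq_norm_le_of_mem_sup (T₁ T₂ : Submodule ℝ E) :
    ∃ C, 0 < C ∧ ∀ x ∈ T₁ ⊔ T₂, ∃ s₁ ∈ T₁, ∃ s₂ ∈ T₂, s₁ + s₂ = x ∧ ‖s₁‖ ≤ C * ‖x‖ := by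
  let f : T₁ × T₂ →L[ℝ] E := T₁.subtypeL.coprod T₂.subtypeL
  have hrange : LinearMap.range (f : T₁ × T₂ →ₗ[ℝ] E) = T₁ ⊔ T₂ :=
    (Submodule.sup_eq_range T₁ T₂).symm
  obtain ⟨C, hC, hlift⟩ := ContinuousLinearMap.exists_preimage_norm_le
    (LinearMap.toContinuousLinearMap (f : T₁ × T₂ →ₗ[ℝ] E).rangeRestrict)
    (LinearMap.surjective_rangeRestrict _)
  refine ⟨C, hC, fun x hx => ?_⟩
  obtain ⟨⟨s₁, s₂⟩, hs, hnorm⟩ := hlift ⟨x, hrange ▸ hx⟩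
  exact ⟨s₁, s₁.2, s₂, s₂.2, congrArg Subtype.val hs, (norm_fst_le (s₁, s₂)).trans hnorm⟩

end Seminorm

lemma seminorm_smul_closedBall_zero {V : Type*} [AddCommGroup V] [Module ℝ V] (p : Seminorm ℝ V)
    {a : ℝ} (ha : 0 < a) (r : ℝ) : a • p.closedBall 0 r = p.closedBall 0 (a * r) := by
  rw [Seminorm.smul_closedBall_zero (norm_pos_iff.2 ha.ne'), Real.norm_of_nonneg ha.le]

section Measure

lemma addHaar_image_seminorm_closedBall {V F : Type*} [AddCommGroup V] [Module ℝ V]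
    [NormedAddCommGroup F] [NormedSpace ℝ F] [FiniteDimensional ℝ F] [MeasurableSpace F]
    [BorelSpace F] (μ : Measure F) [μ.IsAddHaarMeasure] (f : V →ₗ[ℝ] F) (p : Seminorm ℝ V)
    {r : ℝ} (hr : 0 < r) :
    μ (f '' p.closedBall 0 r) =
      ENNReal.ofReal (r ^ Module.finrank ℝ F) * μ (f '' p.closedBall 0 1) := by
  rw [← Measure.addHaar_smul_of_nonneg μ hr.le, ← image_smul_set,
    seminorm_smul_closedBall_zero p hr, mul_one]

lemma addHaar_seminorm_closedBall {F : Type*} [NormedAddCommGroup F] [NormedSpace ℝ F]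
    [FiniteDimensional ℝ F] [MeasurableSpace F] [BorelSpace F] (μ : Measure F)
    [μ.IsAddHaarMeasure] (p : Seminorm ℝ F) {r : ℝ} (hr : 0 < r) :
    μ (p.closedBall 0 r) = ENNReal.ofReal (r ^ Module.finrank ℝ F) * μ (p.closedBall 0 1) := by
  simpa using addHaar_image_seminorm_closedBall μ LinearMap.id p hr

lemma volume_orthogonalProjectionOnto_preimage_inter {E : Type*} [NormedAddCommGroup E]
    [InnerProductSpace ℝ E] [FiniteDimensional ℝ E] [MeasurableSpace E] [BorelSpace E]
    (T : Submodule ℝ E) (A : Set T) (B : Set Tᗮ) :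
    volume (T.orthogonalProjectionOnto ⁻¹' A ∩ Tᗮ.orthogonalProjectionOnto ⁻¹' B) =
      volume A * volume B := by
  have hpres : MeasurePreserving (T.measurableEquivProd (0 : E)) volume volume := by
    rw [← InnerProductSpace.euclideanHausdorffMeasure_eq_volume (V := E)]
    exact T.measurePreserving_measurableEquivProd 0
  rw [← Measure.prod_prod, ← Measure.volume_eq_prod, ← hpres.measure_preimage_equiv]
  congr 1
  ext d
  simp

lemma sum_measure_le_measure_biUnion_add_sum_offDiag {α κ : Type*} [MeasurableSpace α]
    (μ : Measure α) {A : κ → Set α} (hA : ∀ k, MeasurableSet (A k))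
    (s : Finset κ) :
    ∑ k ∈ s, μ (A k) ≤ μ (⋃ k ∈ s, A k) + ∑ x ∈ s.offDiag, μ (A x.1 ∩ A x.2) := by
  classical
  induction s using Finset.induction_on with
  | empty => simp
  | insert a s ha ih =>
    have hinter : μ (A a ∩ ⋃ k ∈ s, A k) ≤ ∑ x ∈ {a} ×ˢ s, μ (A x.1 ∩ A x.2) := by
      rw [Set.inter_iUnion₂, Finset.sum_product, Finset.sum_singleton]
      exact measure_biUnion_finset_le s _
    have hdisj : Disjoint s.offDiag ({a} ×ˢ s) := by
      rw [Finset.disjoint_left]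
      grind
    rw [Finset.sum_insert ha, Finset.set_biUnion_insert]
    calc μ (A a) + ∑ k ∈ s, μ (A k)
        ≤ μ (A a) + (μ (⋃ k ∈ s, A k) + ∑ x ∈ s.offDiag, μ (A x.1 ∩ A x.2)) := by gcongr
      _ = μ (A a ∪ ⋃ k ∈ s, A k) +
            (∑ x ∈ s.offDiag, μ (A x.1 ∩ A x.2) + μ (A a ∩ ⋃ k ∈ s, A k)) := by
          rw [← add_assoc, ← measure_union_add_inter (A a)
            (Finset.measurableSet_biUnion s fun k _ => hA k)]
          ring
      _ ≤ μ (A a ∪ ⋃ k ∈ s, A k) + ∑ x ∈ s.offDiag ∪ {a} ×ˢ s, μ (A x.1 ∩ A x.2) := by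
          rw [Finset.sum_union hdisj]
          gcongr
      _ ≤ μ (A a ∪ ⋃ k ∈ s, A k) + ∑ x ∈ (insert a s).offDiag, μ (A x.1 ∩ A x.2) := by
          rw [Finset.offDiag_insert ha]
          exact add_le_add_right (Finset.sum_le_sum_of_subset Finset.subset_union_left) _

end Measure

section Cylinder

/-- The cylinder `T + B_p(τ)` of `p`-radius `τ` around the subspace `T`; the set `A_K(τ)` is a
union of such cylinders. -/
def subspaceCylinder {V : Type*} [AddCommGroup V] [Module ℝ V] (p : Seminorm ℝ V)
    (T : Submodule ℝ V) (τ : ℝ) : Set V :=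
  T + p.closedBall 0 τ

section Module

variable {V : Type*} [AddCommGroup V] [Module ℝ V] {p : Seminorm ℝ V} {T : Submodule ℝ V}

lemma mem_subspaceCylinder {τ : ℝ} {d : V} :
    d ∈ subspaceCylinder p T τ ↔ ∃ t ∈ T, p (d - t) ≤ τ := by
  simp only [subspaceCylinder, Set.mem_add, SetLike.mem_coe, p.mem_closedBall_zero]
  refine exists_congr fun t => and_congr_right fun _ => ⟨?_, fun h => ⟨d - t, h, by abel⟩⟩
  rintro ⟨b, hb, rfl⟩
  rwa [add_sub_cancel_left]

lemma smul_subspaceCylinder (p : Seminorm ℝ V) (T : Submodule ℝ V) {a : ℝ} (ha : 0 < a) (τ : ℝ) :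
    a • subspaceCylinder p T τ = subspaceCylinder p T (a * τ) := by
  have hT : a • (T : Set V) = T := by
    ext x
    rw [Set.mem_smul_set_iff_inv_smul_mem₀ ha.ne']
    exact T.smul_mem_iff (inv_ne_zero ha.ne')
  rw [subspaceCylinder, smul_add, hT, seminorm_smul_closedBall_zero p ha, subspaceCylinder]

end Module

section NormedSpace

variable {E : Type*} [NormedAddCommGroup E] [NormedSpace ℝ E] [FiniteDimensional ℝ E]

lemma isClosed_subspaceCylinder {p : Seminorm ℝ E} (hp : ∀ x, p x = 0 → x = 0)
    (T : Submodule ℝ E) (τ : ℝ) : IsClosed (subspaceCylinder p T τ) :=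
  T.closed_of_finiteDimensional.add_right_of_isCompact (isCompact_seminorm_closedBall hp τ)

lemma exists_subspaceCylinder_inter_subset {p : Seminorm ℝ E} (hp : ∀ x, p x = 0 → x = 0)
    (T₁ T₂ : Submodule ℝ E) :
    ∃ R, 0 < R ∧ ∀ τ, subspaceCylinder p T₁ τ ∩ subspaceCylinder p T₂ τ ⊆
      subspaceCylinder p (T₁ ⊓ T₂) (R * τ) := by
  obtain ⟨C, hC, hsplit⟩ := exists_add_eq_norm_le_of_mem_sup T₁ T₂
  obtain ⟨δ, hδ, hle⟩ := exists_seminorm_le_mul_seminorm p hp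
  refine ⟨1 + δ * (C * 2), by positivity, fun τ d ⟨hd₁, hd₂⟩ => mem_subspaceCylinder.2 ?_⟩
  obtain ⟨t₁, ht₁, h₁⟩ := mem_subspaceCylinder.1 hd₁
  obtain ⟨t₂, ht₂, h₂⟩ := mem_subspaceCylinder.1 hd₂
  obtain ⟨s₁, hs₁, s₂, hs₂, hs, hnorm⟩ := hsplit (t₂ - t₁)
    (sub_mem (Submodule.mem_sup_right ht₂) (Submodule.mem_sup_left ht₁))
  have hmem : t₁ + s₁ ∈ T₂ := by
    rw [eq_sub_of_add_eq hs, sub_right_comm, add_sub_cancel]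
    exact sub_mem ht₂ hs₂
  have hdiff : p (t₂ - t₁) ≤ 2 * τ := by
    calc p (t₂ - t₁) = p ((d - t₁) - (d - t₂)) := by rw [sub_sub_sub_cancel_left]
      _ ≤ p (d - t₁) + p (d - t₂) := map_sub_le_add p _ _
      _ ≤ 2 * τ := by linarith
  have hps₁ : p s₁ ≤ δ * (C * (2 * τ)) := by
    calc p s₁ ≤ δ * p (C • (t₂ - t₁)) :=
          hle _ _ (by rwa [norm_smul, Real.norm_of_nonneg hC.le])
      _ = δ * (C * p (t₂ - t₁)) := by rw [map_smul_eq_mul, Real.norm_of_nonneg hC.le]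
      _ ≤ δ * (C * (2 * τ)) := by gcongr
  refine ⟨t₁ + s₁, ⟨add_mem ht₁ hs₁, hmem⟩, ?_⟩
  calc p (d - (t₁ + s₁)) = p ((d - t₁) - s₁) := by rw [sub_sub]
    _ ≤ p (d - t₁) + p s₁ := map_sub_le_add p _ _
    _ ≤ τ + δ * (C * (2 * τ)) := add_le_add h₁ hps₁
    _ = (1 + δ * (C * 2)) * τ := by ring

lemma addHaar_iUnion_subspaceCylinder_inter_closedBall [MeasurableSpace E] [BorelSpace E]
    (μ : Measure E) [μ.IsAddHaarMeasure] (p q : Seminorm ℝ E) {κ : Type*}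
    (T : κ → Submodule ℝ E) (τ : ℝ) {θ : ℝ} (hθ : 0 < θ) :
    μ ((⋃ j, subspaceCylinder p (T j) τ) ∩ q.closedBall 0 θ) =
      ENNReal.ofReal (θ ^ Module.finrank ℝ E) *
        μ ((⋃ j, subspaceCylinder p (T j) (τ / θ)) ∩ q.closedBall 0 1) := by
  rw [← Measure.addHaar_smul_of_nonneg μ hθ.le, Set.smul_set_inter₀ hθ.ne', Set.smul_set_iUnion,
    seminorm_smul_closedBall_zero q hθ, mul_one]
  simp only [smul_subspaceCylinder p _ hθ, mul_div_cancel₀ _ hθ.ne']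

end NormedSpace

section InnerProductSpace

variable {E : Type*} [NormedAddCommGroup E] [InnerProductSpace ℝ E] [FiniteDimensional ℝ E]
  {p q : Seminorm ℝ E} {δ : ℝ}

lemma subspaceCylinder_eq_preimage (p : Seminorm ℝ E) (T : Submodule ℝ E) (τ : ℝ) :
    subspaceCylinder p T τ =
      Tᗮ.orthogonalProjectionOnto ⁻¹' (Tᗮ.orthogonalProjectionOnto '' p.closedBall 0 τ) := by
  have hker (x y : E) :
      Tᗮ.orthogonalProjectionOnto x = Tᗮ.orthogonalProjectionOnto y ↔ y - x ∈ T := by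
    rw [eq_comm, ← sub_eq_zero, ← map_sub, Submodule.orthogonalProjectionOnto_eq_zero_iff,
      Submodule.orthogonal_orthogonal]
  ext d
  simp only [subspaceCylinder, Set.mem_add, SetLike.mem_coe, Set.mem_preimage, Set.mem_image, hker]
  constructor
  · rintro ⟨t, ht, b, hb, rfl⟩
    exact ⟨b, hb, by rwa [add_sub_cancel_right]⟩
  · rintro ⟨b, hb, hbd⟩
    exact ⟨d - b, hbd, b, hb, sub_add_cancel d b⟩

lemma seminorm_starProjection_orthogonal_le_of_mem_subspaceCylinder {T : Submodule ℝ E} {τ : ℝ}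
    {d : E} (hδ₀ : 0 ≤ δ) (hδ : ∀ x y, ‖x‖ ≤ ‖y‖ → q x ≤ δ * p y)
    (hd : d ∈ subspaceCylinder p T τ) : q (Tᗮ.starProjection d) ≤ δ * τ := by
  obtain ⟨t, ht, hpt⟩ := mem_subspaceCylinder.1 hd
  have hproj : Tᗮ.starProjection d = Tᗮ.starProjection (d - t) := by
    rw [map_sub, (Submodule.starProjection_apply_eq_zero_iff Tᗮ).2
      (T.le_orthogonal_orthogonal ht), sub_zero]
  calc q (Tᗮ.starProjection d) = q (Tᗮ.starProjection (d - t)) := by rw [hproj]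
    _ ≤ δ * p (d - t) := hδ _ _ (Tᗮ.norm_starProjection_apply_le _)
    _ ≤ δ * τ := by gcongr

lemma finrank_orthogonal_eq_sub (T : Submodule ℝ E) :
    Module.finrank ℝ Tᗮ = Module.finrank ℝ E - Module.finrank ℝ T := by
  rw [← T.finrank_add_finrank_orthogonal, Nat.add_sub_cancel_left]

variable [MeasurableSpace E] [BorelSpace E]

/-- The constant `μ(P_{Tᗮ}(B_p(1))) · μ(T ∩ B_q(1))`, which is `C_J` for `T = T_J`. -/
noncomputable def cylinderConst (p q : Seminorm ℝ E) (T : Submodule ℝ E) : ENNReal :=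
  volume (Tᗮ.orthogonalProjectionOnto '' p.closedBall 0 1) *
    volume ((q.comp T.subtype).closedBall 0 1)

lemma cylinderConst_ne_top (hp : ∀ x, p x = 0 → x = 0) (hq : ∀ x, q x = 0 → x = 0)
    (T : Submodule ℝ E) : cylinderConst p q T ≠ ⊤ := by
  have hqT (x : T) (hx : q.comp T.subtype x = 0) : x = 0 := Subtype.ext (hq x hx)
  exact ENNReal.mul_ne_top
    ((isCompact_seminorm_closedBall hp 1).image
      Tᗮ.orthogonalProjectionOnto.continuous).measure_ne_top
    (isCompact_seminorm_closedBall hqT 1).measure_ne_top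

lemma volume_subspaceCylinder_inter_preimage (p q : Seminorm ℝ E) (T : Submodule ℝ E) {τ r : ℝ}
    (hτ : 0 < τ) (hr : 0 < r) :
    volume (subspaceCylinder p T τ ∩ T.starProjection ⁻¹' q.closedBall 0 r) =
      cylinderConst p q T *
        ENNReal.ofReal (τ ^ Module.finrank ℝ Tᗮ * r ^ Module.finrank ℝ T) := by
  have hpre : T.starProjection ⁻¹' q.closedBall 0 r =
      T.orthogonalProjectionOnto ⁻¹' (q.comp T.subtype).closedBall 0 r := by
    ext d
    simp
  rw [hpre, subspaceCylinder_eq_preimage, Set.inter_comm,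
    volume_orthogonalProjectionOnto_preimage_inter, addHaar_seminorm_closedBall _ _ hr,
    ← ContinuousLinearMap.coe_coe Tᗮ.orthogonalProjectionOnto,
    addHaar_image_seminorm_closedBall _ _ p hτ, ContinuousLinearMap.coe_coe, cylinderConst,
    ENNReal.ofReal_mul (by positivity)]
  ring

lemma volume_subspaceCylinder_inter_closedBall_le (hδ₀ : 0 ≤ δ)
    (hδ : ∀ x y, ‖x‖ ≤ ‖y‖ → q x ≤ δ * p y) (T : Submodule ℝ E) {t : ℝ} (ht : 0 < t) :
    volume (subspaceCylinder p T t ∩ q.closedBall 0 1) ≤ cylinderConst p q T *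
      ENNReal.ofReal (t ^ Module.finrank ℝ Tᗮ * (1 + δ * t) ^ Module.finrank ℝ T) := by
  rw [← volume_subspaceCylinder_inter_preimage p q T ht (by positivity)]
  refine measure_mono fun d ⟨hd, hqd⟩ => ⟨hd, ?_⟩
  rw [Set.mem_preimage]
  rw [q.mem_closedBall_zero] at hqd ⊢
  calc q (T.starProjection d) = q (d - Tᗮ.starProjection d) := by
        rw [Submodule.starProjection_orthogonal_val, sub_sub_cancel]
    _ ≤ q d + q (Tᗮ.starProjection d) := map_sub_le_add q _ _
    _ ≤ 1 + δ * t :=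
        add_le_add hqd (seminorm_starProjection_orthogonal_le_of_mem_subspaceCylinder hδ₀ hδ hd)

lemma le_volume_subspaceCylinder_inter_closedBall (hδ₀ : 0 ≤ δ)
    (hδ : ∀ x y, ‖x‖ ≤ ‖y‖ → q x ≤ δ * p y) (T : Submodule ℝ E) {t : ℝ} (ht : 0 < t)
    (hδt : δ * t < 1) :
    cylinderConst p q T *
        ENNReal.ofReal (t ^ Module.finrank ℝ Tᗮ * (1 - δ * t) ^ Module.finrank ℝ T) ≤
      volume (subspaceCylinder p T t ∩ q.closedBall 0 1) := by
  rw [← volume_subspaceCylinder_inter_preimage p q T ht (sub_pos.2 hδt)]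
  refine measure_mono fun d ⟨hd, hqd⟩ => ⟨hd, ?_⟩
  rw [Set.mem_preimage] at hqd
  rw [q.mem_closedBall_zero] at hqd ⊢
  calc q d = q (T.starProjection d + Tᗮ.starProjection d) := by
        rw [Submodule.starProjection_add_starProjection_orthogonal]
    _ ≤ q (T.starProjection d) + q (Tᗮ.starProjection d) := map_add_le_add q _ _
    _ ≤ (1 - δ * t) + δ * t :=
        add_le_add hqd (seminorm_starProjection_orthogonal_le_of_mem_subspaceCylinder hδ₀ hδ hd)
    _ = 1 := sub_add_cancel 1 _

lemma exists_volume_subspaceCylinder_inter_le (hp : ∀ x, p x = 0 → x = 0)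
    (hq : ∀ x, q x = 0 → x = 0) {T₁ T₂ : Submodule ℝ E}
    (hdim : Module.finrank ℝ T₁ = Module.finrank ℝ T₂) (hne : T₁ ≠ T₂) :
    ∃ M : NNReal, ∀ t, 0 < t → t ≤ 1 →
      volume (subspaceCylinder p T₁ t ∩ subspaceCylinder p T₂ t ∩ q.closedBall 0 1) ≤
        M * ENNReal.ofReal (t ^ (Module.finrank ℝ T₁ᗮ + 1)) := by
  obtain ⟨R, hR, hsub⟩ := exists_subspaceCylinder_inter_subset hp T₁ T₂
  obtain ⟨δ, hδ₀, hδ⟩ := exists_seminorm_le_mul_seminorm q hp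
  set S := T₁ ⊓ T₂
  have hlt : S < T₁ :=
    inf_lt_left.2 fun hle => hne (Submodule.eq_of_le_of_finrank_eq hle hdim)
  have hcodim : Module.finrank ℝ T₁ᗮ + 1 ≤ Module.finrank ℝ Sᗮ := by
    have := Submodule.finrank_lt_finrank_of_lt hlt
    have := T₁.finrank_add_finrank_orthogonal
    have := S.finrank_add_finrank_orthogonal
    omega
  refine ⟨(cylinderConst p q S * ENNReal.ofReal
    (R ^ Module.finrank ℝ Sᗮ * (1 + δ * R) ^ Module.finrank ℝ S)).toNNReal, fun t ht ht₁ => ?_⟩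
  rw [ENNReal.coe_toNNReal (ENNReal.mul_ne_top (cylinderConst_ne_top hp hq S)
    ENNReal.ofReal_ne_top), mul_assoc, ← ENNReal.ofReal_mul (by positivity)]
  calc _ ≤ volume (subspaceCylinder p S (R * t) ∩ q.closedBall 0 1) := by gcongr; exact hsub t
    _ ≤ cylinderConst p q S * ENNReal.ofReal
          ((R * t) ^ Module.finrank ℝ Sᗮ * (1 + δ * (R * t)) ^ Module.finrank ℝ S) :=
        volume_subspaceCylinder_inter_closedBall_le hδ₀ hδ S (by positivity)
    _ ≤ _ := by
        rw [mul_pow, mul_right_comm]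
        gcongr _ * ENNReal.ofReal (_ * (1 + δ * ?_) ^ _ * ?_)
        · exact mul_le_of_le_one_right hR.le ht₁
        · exact pow_le_pow_of_le_one ht.le ht₁ hcodim

variable {κ : Type*} [Fintype κ] {T : κ → Submodule ℝ E} {K : ℕ}

lemma volume_iUnion_subspaceCylinder_inter_closedBall_le (hδ₀ : 0 ≤ δ)
    (hδ : ∀ x y, ‖x‖ ≤ ‖y‖ → q x ≤ δ * p y) (hdim : ∀ j, Module.finrank ℝ (T j) = K)
    {t : ℝ} (ht : 0 < t) :
    volume ((⋃ j, subspaceCylinder p (T j) t) ∩ q.closedBall 0 1) ≤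
      (∑ j, cylinderConst p q (T j)) *
        ENNReal.ofReal (t ^ (Module.finrank ℝ E - K) * (1 + δ * t) ^ K) := by
  rw [Set.iUnion_inter, Finset.sum_mul]
  refine (measure_iUnion_fintype_le _ _).trans (Finset.sum_le_sum fun j _ => ?_)
  simpa only [hdim, finrank_orthogonal_eq_sub] using
    volume_subspaceCylinder_inter_closedBall_le hδ₀ hδ (T j) ht

lemma exists_le_volume_iUnion_subspaceCylinder_inter_closedBall_add
    (hp : ∀ x, p x = 0 → x = 0) (hq : ∀ x, q x = 0 → x = 0) (hδ₀ : 0 ≤ δ)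
    (hδ : ∀ x y, ‖x‖ ≤ ‖y‖ → q x ≤ δ * p y) (hdim : ∀ j, Module.finrank ℝ (T j) = K)
    (hT : Function.Injective T) :
    ∃ M : NNReal, ∀ t, 0 < t → t ≤ 1 → δ * t < 1 →
      (∑ j, cylinderConst p q (T j)) *
          ENNReal.ofReal (t ^ (Module.finrank ℝ E - K) * (1 - δ * t) ^ K) ≤
        volume ((⋃ j, subspaceCylinder p (T j) t) ∩ q.closedBall 0 1) +
          M * ENNReal.ofReal (t ^ (Module.finrank ℝ E - K + 1)) := by
  classical
  have hpair (x : κ × κ) (hx : x ∈ Finset.univ.offDiag) :=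
    exists_volume_subspaceCylinder_inter_le hp hq ((hdim x.1).trans (hdim x.2).symm)
      (hT.ne (Finset.mem_offDiag.1 hx).2.2)
  choose! M hM using hpair
  refine ⟨∑ x ∈ Finset.univ.offDiag, M x, fun t ht ht₁ hδt => ?_⟩
  let A (j : κ) : Set E := subspaceCylinder p (T j) t ∩ q.closedBall 0 1
  have hA (j : κ) : MeasurableSet (A j) :=
    ((isClosed_subspaceCylinder hp (T j) t).inter
      (isCompact_seminorm_closedBall hq 1).isClosed).measurableSet
  calc _ ≤ ∑ j, volume (A j) := by
        rw [Finset.sum_mul]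
        refine Finset.sum_le_sum fun j _ => ?_
        simpa only [hdim, finrank_orthogonal_eq_sub] using
          le_volume_subspaceCylinder_inter_closedBall hδ₀ hδ (T j) ht hδt
    _ ≤ volume (⋃ j ∈ Finset.univ, A j) +
          ∑ x ∈ Finset.univ.offDiag, volume (A x.1 ∩ A x.2) :=
        sum_measure_le_measure_biUnion_add_sum_offDiag volume hA Finset.univ
    _ ≤ _ := by
        rw [Set.iUnion_inter, ENNReal.ofNNReal_finsetSum, Finset.sum_mul]
        simp only [Finset.mem_univ, Set.iUnion_true]
        refine add_le_add_right (Finset.sum_le_sum fun x hx => ?_) _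
        simpa only [A, ← Set.inter_inter_distrib_right, hdim, finrank_orthogonal_eq_sub] using
          hM x hx t ht ht₁

end InnerProductSpace

end Cylinder

section SpanImage

lemma mem_span_image_iff_exists_support_subset {R M ι : Type*} [Semiring R] [AddCommMonoid M]
    [Module R M] [Fintype ι] {v : ι → M} {s : Set ι} {x : M} :
    x ∈ span R (v '' s) ↔ ∃ c : ι → R, {i | c i ≠ 0} ⊆ s ∧ ∑ i, c i • v i = x := by
  have hsum (l : ι →₀ R) : Finsupp.linearCombination R v l = ∑ i, l i • v i := by
    rw [Finsupp.linearCombination_apply, Finsupp.sum_fintype _ _ fun i => zero_smul R (v i)]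
  simp only [Finsupp.mem_span_image_iff_linearCombination, hsum, Finsupp.mem_supported]
  constructor
  · rintro ⟨l, hl, hx⟩
    exact ⟨l, fun i hi => hl (Finsupp.mem_support_iff.2 hi), hx⟩
  · rintro ⟨c, hc, hx⟩
    exact ⟨Finsupp.equivFunOnFinite.symm c, fun i hi => hc (Finsupp.mem_support_iff.1 hi), hx⟩

variable {k V ι : Type*} [DivisionRing k] [AddCommGroup V] [Module k V] {v : ι → V}

lemma exists_linearIndepOn_superset_span_image_eq {s t : Set ι} (hs : LinearIndepOn k v s)
    (hst : s ⊆ t) :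
    ∃ b ⊆ t, s ⊆ b ∧ LinearIndepOn k v b ∧ span k (v '' b) = span k (v '' t) := by
  obtain ⟨b, hbt, hsb, hspan, hb⟩ := exists_linearIndepOn_extension hs hst
  exact ⟨b, hbt, hsb, hb, (span_mono (Set.image_mono hbt)).antisymm (span_le.2 hspan)⟩

variable [Finite ι]

lemma finrank_span_image_of_linearIndepOn {s : Set ι} (hs : LinearIndepOn k v s) :
    Module.finrank k (span k (v '' s)) = s.ncard := by
  have := Fintype.ofFinite s
  rw [Set.image_eq_range, finrank_span_eq_card hs, ← Nat.card_eq_fintype_card,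
    Nat.card_coe_set_eq]

lemma exists_subset_ncard_eq_finrank_span_image (v : ι → V) (s : Set ι) :
    ∃ b ⊆ s, b.ncard = Module.finrank k (span k (v '' s)) ∧ span k (v '' b) = span k (v '' s) := by
  obtain ⟨b, hbs, -, hb, hspan⟩ :=
    exists_linearIndepOn_superset_span_image_eq (linearIndepOn_empty k v) s.empty_subset
  exact ⟨b, hbs, by rw [← hspan, finrank_span_image_of_linearIndepOn hb], hspan⟩

lemma finrank_span_image_le_ncard (v : ι → V) (s : Set ι) :
    Module.finrank k (span k (v '' s)) ≤ s.ncard := by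
  obtain ⟨b, hbs, hcard, -⟩ := exists_subset_ncard_eq_finrank_span_image (k := k) v s
  exact hcard.symm.trans_le (Set.ncard_le_ncard hbs)

lemma exists_span_image_le_finrank_eq {s : Set ι} {K : ℕ}
    (hs : Module.finrank k (span k (v '' s)) ≤ K)
    (hK : K ≤ Module.finrank k (span k (Set.range v))) :
    ∃ t, span k (v '' s) ≤ span k (v '' t) ∧ Module.finrank k (span k (v '' t)) = K := by
  obtain ⟨b, -, -, hb, hbs⟩ :=
    exists_linearIndepOn_superset_span_image_eq (linearIndepOn_empty k v) s.empty_subset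
  obtain ⟨u, -, hbu, hu, hspan⟩ := exists_linearIndepOn_superset_span_image_eq hb b.subset_univ
  rw [← hbs, finrank_span_image_of_linearIndepOn hb] at hs
  rw [← Set.image_univ, ← hspan, finrank_span_image_of_linearIndepOn hu] at hK
  obtain ⟨t, hbt, htu, rfl⟩ := Set.exists_subsuperset_card_eq hbu hs hK
  exact ⟨t, hbs ▸ span_mono (Set.image_mono hbt),
    finrank_span_image_of_linearIndepOn (hu.mono htu)⟩

end SpanImage

section Dictionary

variable {N : ℕ}

lemma IsNormOn.exists_seminorm {f : EuclideanSpace ℝ (Fin N) → ℝ} (hf : IsNormOn f ⊤) :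
    ∃ p : Seminorm ℝ (EuclideanSpace ℝ (Fin N)), (∀ x, p x = 0 → x = 0) ∧ ⇑p = f := by
  obtain ⟨-, hzero, hsmul, hadd⟩ := hf
  exact ⟨Seminorm.of f (fun x y => hadd x trivial y trivial) fun c x => hsmul c x trivial,
    fun x => (hzero x trivial).1, rfl⟩

variable {ι : Type*} [Fintype ι] {ψ : ι → EuclideanSpace ℝ (Fin N)}
  {p q : Seminorm ℝ (EuclideanSpace ℝ (Fin N))} {K : ℕ}

lemma valP_le_iff_exists_ncard_le (hspan : span ℝ (Set.range ψ) = ⊤) {τ : ℝ} (hτ : 0 ≤ τ)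
    {d : EuclideanSpace ℝ (Fin N)} :
    valP ψ p τ d ≤ K ↔
      ∃ J : Set ι, J.ncard ≤ K ∧ d ∈ subspaceCylinder p (span ℝ (ψ '' J)) τ := by
  simp only [mem_subspaceCylinder, mem_span_image_iff_exists_support_subset]
  constructor
  · intro hval
    obtain ⟨c₀, hc₀⟩ := (mem_span_range_iff_exists_fun ℝ).1
      (hspan.symm ▸ mem_top : d ∈ span ℝ (Set.range ψ))
    obtain ⟨c, hc, hcard⟩ := Nat.sInf_mem (s := {k : ℕ | ∃ c : ι → ℝ,
      p ((∑ i, c i • ψ i) - d) ≤ τ ∧ {i | c i ≠ 0}.ncard = k}) ⟨_, c₀, by simpa [hc₀] using hτ, rfl⟩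
    exact ⟨{i | c i ≠ 0}, hcard.trans_le hval, _, ⟨c, subset_rfl, rfl⟩, by rwa [map_sub_rev]⟩
  · rintro ⟨J, hJ, _, ⟨c, hcJ, rfl⟩, hc⟩
    calc valP ψ p τ d ≤ {i | c i ≠ 0}.ncard := Nat.sInf_le ⟨c, by rwa [map_sub_rev], rfl⟩
      _ ≤ J.ncard := Set.ncard_le_ncard hcJ
      _ ≤ K := hJ

lemma setOf_valP_le_eq_iUnion_subspaceCylinder (hspan : span ℝ (Set.range ψ) = ⊤) (hK : K ≤ N)
    {𝒥 : Set (Set ι)} (h𝒥 : IsJFamily ψ K 𝒥) {τ : ℝ} (hτ : 0 ≤ τ) :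
    {d | valP ψ p τ d ≤ K} = ⋃ J : 𝒥, subspaceCylinder p (span ℝ (ψ '' J)) τ := by
  obtain ⟨hdim, -, hmax⟩ := h𝒥
  ext d
  simp only [Set.mem_ofPred_eq, valP_le_iff_exists_ncard_le hspan hτ, Set.mem_iUnion]
  constructor
  · rintro ⟨J, hJ, hd⟩
    obtain ⟨J', hle, hJ'⟩ := exists_span_image_le_finrank_eq (k := ℝ)
      ((finrank_span_image_le_ncard ψ J).trans hJ)
      (by rwa [hspan, finrank_top, finrank_euclideanSpace_fin])
    obtain ⟨L, hL, hLJ⟩ := hmax J' hJ'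
    exact ⟨⟨L, hL⟩, Set.add_subset_add_right (hle.trans hLJ.ge) hd⟩
  · rintro ⟨⟨J, hJ⟩, hd⟩
    obtain ⟨b, -, hcard, hb⟩ := exists_subset_ncard_eq_finrank_span_image (k := ℝ) ψ J
    exact ⟨b, (hcard.trans (hdim J hJ)).le, hb ▸ hd⟩

lemma volume_setOf_valP_le_inter_closedBall_div (hspan : span ℝ (Set.range ψ) = ⊤) (hK : K ≤ N)
    {𝒥 : Set (Set ι)} (h𝒥 : IsJFamily ψ K 𝒥) {τ θ : ℝ} (hτ : 0 ≤ τ) (hθ : 0 < θ) :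
    volume ({d | valP ψ p τ d ≤ K} ∩ q.closedBall 0 θ) / volume (q.closedBall 0 θ) =
      volume ((⋃ J : 𝒥, subspaceCylinder p (span ℝ (ψ '' J)) (τ / θ)) ∩ q.closedBall 0 1) /
        volume (q.closedBall 0 1) := by
  rw [setOf_valP_le_eq_iUnion_subspaceCylinder hspan hK h𝒥 hτ,
    addHaar_iUnion_subspaceCylinder_inter_closedBall _ p q _ τ hθ,
    addHaar_seminorm_closedBall _ q hθ]
  exact ENNReal.mul_div_mul_left _ _ (ENNReal.ofReal_pos.2 (by positivity)).ne'
    ENNReal.ofReal_ne_top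

lemma IsJFamily.injective_span_image {𝒥 : Set (Set ι)} (h𝒥 : IsJFamily ψ K 𝒥) :
    Function.Injective fun J : 𝒥 => span ℝ (ψ '' J) := fun J₁ J₂ h =>
  Subtype.ext (by_contra fun hne => h𝒥.2.1 J₁ J₁.2 J₂ J₂.2 hne h)

lemma CJ_eq_cylinderConst (ψ : ι → EuclideanSpace ℝ (Fin N))
    (p q : Seminorm ℝ (EuclideanSpace ℝ (Fin N))) (J : Set ι) :
    CJ ψ p q J = cylinderConst p q (span ℝ (ψ '' J)) := by
  simp only [CJ, cylinderConst, Seminorm.closedBall_zero_eq]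
  rfl

end Dictionary

/-- if `d` is uniformly distributed on `B_{f_d}(θ)`, then
`P(val(P_d) ≤ K) = μ_N(A_K(τ) ∩ B_{f_d}(θ)) / (θ^N μ_N(B_{f_d}(1)))`, and this probability
is sandwiched between
`Ĉ_K/μ_N(B_{f_d}(1)) (τ/θ)^{N−K}(1 ∓ δ̂_K τ/θ)^K` up to the error `ε₀/μ_N(B_{f_d}(1))`.
The uniform probability of a set `S` is `volume (S ∩ B_{f_d}(θ)) / volume (B_{f_d}(θ))`. -/
theorem stmt16 {N : ℕ} {ι : Type*} [Fintype ι]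
    (ψ : ι → EuclideanSpace ℝ (Fin N))
    (hspan : Submodule.span ℝ (Set.range ψ) = ⊤)
    (nn fd : EuclideanSpace ℝ (Fin N) → ℝ)
    (hnn : IsNormOn nn ⊤) (hfd : IsNormOn fd ⊤)
    (K : ℕ) (hK : K ≤ N)
    (𝒥 : Set (Set ι)) (h𝒥 : IsJFamily ψ K 𝒥)
    (CK : ENNReal) (hCK : CK = ∑' J : 𝒥, CJ ψ nn fd (J : Set ι)) :
    (∀ θ : ℝ, 0 < θ →
      volume {w : EuclideanSpace ℝ (Fin N) | fd w ≤ θ} =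
        ENNReal.ofReal (θ ^ N) * volume {w : EuclideanSpace ℝ (Fin N) | fd w ≤ 1}) ∧
    ∃ (δhat Δ : ℝ) (ε₀ : ℝ → ℝ → ℝ), 0 ≤ δhat ∧ δhat ≤ Δ ∧
      (∀ τ θ : ℝ, 0 < τ → 0 < θ → Δ * τ ≤ θ →
        0 ≤ ε₀ τ θ ∧
        CK / volume {w : EuclideanSpace ℝ (Fin N) | fd w ≤ 1}
            * ENNReal.ofReal ((τ / θ) ^ (N - K) * (1 - δhat * (τ / θ)) ^ K)
          - ENNReal.ofReal (ε₀ τ θ) / volume {w : EuclideanSpace ℝ (Fin N) | fd w ≤ 1} ≤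
          volume ({d : EuclideanSpace ℝ (Fin N) | valP ψ nn τ d ≤ K} ∩ {w | fd w ≤ θ})
            / volume {w : EuclideanSpace ℝ (Fin N) | fd w ≤ θ} ∧
        volume ({d : EuclideanSpace ℝ (Fin N) | valP ψ nn τ d ≤ K} ∩ {w | fd w ≤ θ})
            / volume {w : EuclideanSpace ℝ (Fin N) | fd w ≤ θ} ≤
          CK / volume {w : EuclideanSpace ℝ (Fin N) | fd w ≤ 1}
            * ENNReal.ofReal ((τ / θ) ^ (N - K) * (1 + δhat * (τ / θ)) ^ K)) ∧
      (∃ Cerr : ℝ, ∀ τ θ : ℝ, 0 < τ → 0 < θ → Δ * τ ≤ θ →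
        ε₀ τ θ ≤ Cerr * (τ / θ) ^ (N - K + 1)) := by
  obtain ⟨p, hp, rfl⟩ := hnn.exists_seminorm
  obtain ⟨q, hq, rfl⟩ := hfd.exists_seminorm
  have := Fintype.ofFinite 𝒥
  have hdim (J : 𝒥) : Module.finrank ℝ (span ℝ (ψ '' J)) = K := h𝒥.1 J J.2
  have hN : Module.finrank ℝ (EuclideanSpace ℝ (Fin N)) = N := finrank_euclideanSpace_fin
  obtain ⟨δ, hδ₀, hδ⟩ := exists_seminorm_le_mul_seminorm q hp
  obtain ⟨M, hM⟩ := exists_le_volume_iUnion_subspaceCylinder_inter_closedBall_add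
    hp hq hδ₀ hδ hdim h𝒥.injective_span_image
  rw [hCK, tsum_fintype]
  simp only [CJ_eq_cylinderConst, ← Seminorm.closedBall_zero_eq]
  refine ⟨fun θ hθ => by rw [addHaar_seminorm_closedBall _ q hθ, hN], δ, 1 + δ,
    fun τ θ => M * (τ / θ) ^ (N - K + 1), hδ₀, by linarith, fun τ θ hτ hθ hΔ => ?_,
    M, fun _ _ _ _ _ => le_rfl⟩
  have ht : 0 < τ / θ := div_pos hτ hθ
  have hδt : (1 + δ) * (τ / θ) ≤ 1 := by rwa [← mul_div_assoc, div_le_one hθ]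
  rw [volume_setOf_valP_le_inter_closedBall_div hspan hK h𝒥 hτ.le hθ,
    ← ENNReal.mul_div_right_comm, ← ENNReal.mul_div_right_comm, tsub_le_iff_right,
    ← ENNReal.add_div, ENNReal.ofReal_mul M.coe_nonneg, ENNReal.ofReal_coe_nnreal]
  refine ⟨by positivity, ENNReal.div_le_div_right ?_ _, ENNReal.div_le_div_right ?_ _⟩
  · simpa only [hN] using hM (τ / θ) ht (by nlinarith) (by nlinarith)
  · simpa only [hN] using volume_iUnion_subspaceCylinder_inter_closedBall_le hδ₀ hδ hdim ht
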